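/- Let T : [0,L] → ℝ³ be continuous with ‖T(s)‖ = 1 for all s, let V₀ = {g ∈ L²(0,L;ℝ³) : ∫₀ᴸ g = 0}, D_I = {g ∈ V₀ : g·T = 0 a.e.}, D_E = V₀ ∩ D_I^⊥, and let E > 0. Then for every continuous linear functional ℓ on L²(0,L;ℝ³) there exists a unique g ∈ D_E such that E ∫₀ᴸ (g·T)(h·T) = ℓ(h) for every h ∈ D_E. -/

import Mathlib

open MeasureTheory Set Filter Metric intervalIntegral
open scoped Topology ENNReal RealInnerProductSpace

noncomputable section

/-! The form `∫ (g·T)(h·T)` is `⟪P g, h⟫`, where `P g = (g·T) T` is the orthogonal projection of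
`L²` onto tangential fields, and `V₀ = Cᗮ` with `C` the three-dimensional space of constant fields.
Write `Q = 1 - P` and `D_E = Cᗮ ⊓ (Cᗮ ⊓ ker P)ᗮ`. The key fact (`residual_mem`) is that `Q` maps
`D_E` into the finite-dimensional space `Q C`. Hence the compression of `P` to `D_E` is the
identity minus a finite-rank operator; it is injective because `⟪P g, g⟫ = ‖P g‖²` and
`D_E ⊓ ker P = 0`, so it is also surjective (`surjective_of_finite_rank`), and the Riesz
representation of `ℓ` on `D_E` gives the solution. -/

/-- The Fredholm alternative for finite-rank perturbations of the identity. -/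
lemma surjective_of_finite_rank {V : Type*} [AddCommGroup V] [Module ℝ V] (A : V →ₗ[ℝ] V)
    (R : Submodule ℝ V) [FiniteDimensional ℝ R] (hR : ∀ x, x - A x ∈ R)
    (hA : Function.Injective A) : Function.Surjective A := by
  have hmap : ∀ x ∈ R, A x ∈ R := fun x hx => by
    have := R.sub_mem hx (hR x)
    simpa using this
  have hsurj : Function.Surjective (A.restrict hmap) := by
    apply LinearMap.surjective_of_injective
    intro x y hxy
    exact Subtype.ext (hA (congrArg Subtype.val hxy))
  intro y
  obtain ⟨r, hr⟩ := hsurj ⟨y - A y, hR y⟩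
  refine ⟨y + r, ?_⟩
  have h : A r = y - A y := congrArg Subtype.val hr
  rw [map_add, h]
  abel

section Abstract

variable {H : Type*} [NormedAddCommGroup H] [InnerProductSpace ℝ H]

/-- The abstract counterpart of `D_E`: the part of `Cᗮ` orthogonal to `Cᗮ ⊓ ker P`. -/
def extSpace (C : Submodule ℝ H) (P : H →ₗ[ℝ] H) : Submodule ℝ H :=
  Cᗮ ⊓ (Cᗮ ⊓ LinearMap.ker P)ᗮ

/-- The component `r` of `g - P g` orthogonal to `(1 - P) C` lies in `Cᗮ ⊓ ker P`, hence is
orthogonal to `g`, and `⟪g, r⟫ = ‖r‖²`. -/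
lemma residual_mem (C : Submodule ℝ H) [FiniteDimensional ℝ C] (P : H →ₗ[ℝ] H)
    (hsymm : P.IsSymmetric) (hidem : ∀ x, P (P x) = P x) {g : H} (hg : g ∈ extSpace C P) :
    g - P g ∈ C.map (LinearMap.id - P) := by
  set F := C.map (LinearMap.id - P) with hF
  obtain ⟨q, hq, r, hr, hqr⟩ := F.exists_add_mem_mem_orthogonal (g - P g)
  have hPq : P q = 0 := by
    obtain ⟨c, -, rfl⟩ := hq
    simp [hidem]
  have hPr : P r = 0 := by
    have : P (g - P g) = P q + P r := by rw [hqr, map_add]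
    simpa [hidem, hPq] using this.symm
  have hrC : r ∈ Cᗮ := by
    rw [Submodule.mem_orthogonal]
    intro c hc
    have h1 : ⟪c - P c, r⟫ = 0 := (Submodule.mem_orthogonal _ _).1 hr _ ⟨c, hc, by simp⟩
    rw [inner_sub_left, hsymm c r, hPr, inner_zero_right, sub_zero] at h1
    exact h1
  have h2 : ⟪r, g⟫ = 0 := (Submodule.mem_orthogonal _ _).1 hg.2 r ⟨hrC, hPr⟩
  have h3 : ⟪r, P g⟫ = 0 := by rw [← hsymm r g, hPr, inner_zero_left]
  have h4 : ⟪r, q⟫ = 0 := by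
    rw [real_inner_comm]
    exact (Submodule.mem_orthogonal _ _).1 hr q hq
  have h5 : ⟪r, g - P g⟫ = ⟪r, q + r⟫ := by rw [hqr]
  rw [inner_sub_right, inner_add_right, h2, h3, h4, sub_zero, zero_add] at h5
  have : r = 0 := inner_self_eq_zero.1 h5.symm
  rw [hqr, this, add_zero]
  exact hq

lemma eq_zero_of_form_eq_zero (C : Submodule ℝ H) (P : H →ₗ[ℝ] H)
    (hsymm : P.IsSymmetric) (hidem : ∀ x, P (P x) = P x) {g : H} (hg : g ∈ extSpace C P)
    (h0 : ⟪P g, g⟫ = 0) : g = 0 := by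
  have h1 : ⟪P g, P g⟫ = 0 := by rw [← hsymm (P g) g, hidem, h0]
  have h2 : P g = 0 := inner_self_eq_zero.1 h1
  exact inner_self_eq_zero.1 ((Submodule.mem_orthogonal _ _).1 hg.2 g ⟨hg.1, h2⟩)

theorem abstract_wellposed [CompleteSpace H] (C : Submodule ℝ H) [FiniteDimensional ℝ C]
    (P : H →ₗ[ℝ] H) (hsymm : P.IsSymmetric) (hidem : ∀ x, P (P x) = P x) (ℓ : H →L[ℝ] ℝ) :
    ∃! g : H, g ∈ extSpace C P ∧ ∀ h ∈ extSpace C P, ⟪P g, h⟫ = ℓ h := by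
  set D := extSpace C P with hD
  have hclosed : IsClosed (D : Set H) :=
    (Submodule.isClosed_orthogonal _).inter (Submodule.isClosed_orthogonal _)
  have : CompleteSpace D := hclosed.completeSpace_coe
  let π : H →ₗ[ℝ] D := D.orthogonalProjectionOnto.toLinearMap
  have hπ : ∀ (x : H) (h : D), ⟪π x, h⟫ = ⟪x, (h : H)⟫ := fun x h =>
    Submodule.inner_orthogonalProjectionOnto_eq_of_mem_right h x
  let A : D →ₗ[ℝ] D := π ∘ₗ P ∘ₗ D.subtype
  have hA : ∀ g h : D, ⟪A g, h⟫ = ⟪P g, (h : H)⟫ := fun g h => hπ (P g) h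
  have hsurj : Function.Surjective A := by
    apply surjective_of_finite_rank A ((C.map (LinearMap.id - P)).map π)
    · intro x
      refine ⟨x - P x, residual_mem C P hsymm hidem x.2, ?_⟩
      have : π (x : H) = x := Submodule.orthogonalProjectionOnto_mem_subspace_eq_self x
      rw [map_sub, this]
      rfl
    · rw [injective_iff_map_eq_zero]
      intro g hg
      apply Subtype.ext
      apply eq_zero_of_form_eq_zero C P hsymm hidem g.2
      rw [← hA, hg, inner_zero_left]
  obtain ⟨g, hg⟩ := hsurj ((InnerProductSpace.toDual ℝ D).symm (ℓ.comp D.subtypeL))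
  have hsol : ∀ h ∈ D, ⟪P g, h⟫ = ℓ h := by
    intro h hh
    have := hA g ⟨h, hh⟩
    rw [hg, InnerProductSpace.toDual_symm_apply] at this
    exact this.symm
  refine ⟨g, ⟨g.2, hsol⟩, ?_⟩
  rintro g' ⟨hg', hsol'⟩
  have hmem : g' - g ∈ D := D.sub_mem hg' g.2
  apply sub_eq_zero.1
  apply eq_zero_of_form_eq_zero C P hsymm hidem hmem
  rw [map_sub, inner_sub_left, hsol' _ hmem, hsol _ hmem, sub_self]

end Abstract

section Concrete

variable {α V : Type*} [MeasurableSpace α] {μ : Measure α}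
  [NormedAddCommGroup V] [InnerProductSpace ℝ V]

lemma memLp_tangential {T : α → V} (hT : AEStronglyMeasurable T μ) (hT1 : ∀ᵐ s ∂μ, ‖T s‖ = 1)
    (g : Lp V 2 μ) : MemLp (fun s => ⟪g s, T s⟫ • T s) 2 μ := by
  refine (Lp.memLp g).of_le (((Lp.aestronglyMeasurable g).inner hT).smul hT) ?_
  filter_upwards [hT1] with s hs
  rw [norm_smul, hs, mul_one]
  simpa [hs] using norm_inner_le_norm (𝕜 := ℝ) (g s) (T s)

/-- Pointwise orthogonal projection `g ↦ (g·T) T` of `L²` fields onto a unit field `T`. -/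
def tangProj {T : α → V} (hT : AEStronglyMeasurable T μ) (hT1 : ∀ᵐ s ∂μ, ‖T s‖ = 1) :
    Lp V 2 μ →ₗ[ℝ] Lp V 2 μ where
  toFun g := (memLp_tangential hT hT1 g).toLp _
  map_add' f g := by
    apply Lp.ext
    filter_upwards [(memLp_tangential hT hT1 (f + g)).coeFn_toLp,
      (memLp_tangential hT hT1 f).coeFn_toLp, (memLp_tangential hT hT1 g).coeFn_toLp,
      Lp.coeFn_add f g, Lp.coeFn_add ((memLp_tangential hT hT1 f).toLp _)
        ((memLp_tangential hT hT1 g).toLp _)] with s h1 h2 h3 h4 h5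
    rw [h1, h5, Pi.add_apply, h2, h3, h4, Pi.add_apply, inner_add_left, add_smul]
  map_smul' c g := by
    apply Lp.ext
    filter_upwards [(memLp_tangential hT hT1 (c • g)).coeFn_toLp,
      (memLp_tangential hT hT1 g).coeFn_toLp, Lp.coeFn_smul c g,
      Lp.coeFn_smul c ((memLp_tangential hT hT1 g).toLp _)] with s h1 h2 h3 h4
    rw [h1, RingHom.id_apply, h4, Pi.smul_apply, h2, h3, Pi.smul_apply, real_inner_smul_left,
      mul_smul]

variable {T : α → V} (hT : AEStronglyMeasurable T μ) (hT1 : ∀ᵐ s ∂μ, ‖T s‖ = 1)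

lemma tangProj_ae (g : Lp V 2 μ) : tangProj hT hT1 g =ᵐ[μ] fun s => ⟪g s, T s⟫ • T s :=
  (memLp_tangential hT hT1 g).coeFn_toLp

lemma inner_tangProj (g h : Lp V 2 μ) :
    ⟪tangProj hT hT1 g, h⟫ = ∫ s, ⟪g s, T s⟫ * ⟪h s, T s⟫ ∂μ := by
  rw [L2.inner_def]
  apply MeasureTheory.integral_congr_ae
  filter_upwards [tangProj_ae hT hT1 g] with s hs
  rw [hs, real_inner_smul_left, real_inner_comm (h s)]

lemma tangProj_isSymmetric : (tangProj hT hT1).IsSymmetric := by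
  intro g h
  rw [← real_inner_comm g, inner_tangProj, inner_tangProj]
  simp_rw [mul_comm]

lemma tangProj_idem (g : Lp V 2 μ) :
    tangProj hT hT1 (tangProj hT hT1 g) = tangProj hT hT1 g := by
  apply Lp.ext
  filter_upwards [tangProj_ae hT hT1 g, tangProj_ae hT hT1 (tangProj hT hT1 g), hT1]
    with s h1 h2 h3
  rw [h2, h1, real_inner_smul_left, real_inner_self_eq_norm_sq, h3]
  simp

lemma tangProj_eq_zero_iff (g : Lp V 2 μ) :
    tangProj hT hT1 g = 0 ↔ ∀ᵐ s ∂μ, ⟪g s, T s⟫ = 0 := by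
  rw [Lp.eq_zero_iff_ae_eq_zero]
  constructor
  · intro h
    filter_upwards [h, tangProj_ae hT hT1 g, hT1] with s h1 h2 h3
    rw [h2] at h1
    rcases smul_eq_zero.1 h1 with h4 | h4
    · exact h4
    · simp [h4]
  · intro h
    filter_upwards [h, tangProj_ae hT hT1 g] with s h1 h2
    rw [h2, h1, zero_smul, Pi.zero_apply]

lemma mem_orthogonal_const_iff [CompleteSpace V] [IsFiniteMeasure μ] (g : Lp V 2 μ) :
    g ∈ (LinearMap.range (Lp.constL 2 μ ℝ : V →L[ℝ] Lp V 2 μ).toLinearMap)ᗮ ↔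
      ∫ s, g s ∂μ = 0 := by
  have key : ∀ c : V, ⟪(Lp.constL 2 μ ℝ : V →L[ℝ] Lp V 2 μ) c, g⟫ = ⟪c, ∫ s, g s ∂μ⟫ := by
    intro c
    rw [L2.inner_def, ← integral_inner ((Lp.memLp g).integrable one_le_two)]
    apply MeasureTheory.integral_congr_ae
    filter_upwards [Lp.coeFn_const (p := 2) (μ := μ) c] with s hs
    change ⟪(Lp.const 2 μ c) s, g s⟫ = _
    rw [hs, Function.const_apply]
  rw [Submodule.mem_orthogonal]
  constructor
  · intro h
    have := h _ ⟨∫ s, g s ∂μ, rfl⟩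
    exact inner_self_eq_zero.1 ((key _).symm.trans this)
  · rintro h _ ⟨c, rfl⟩
    exact (key c).trans (by rw [h, inner_zero_right])

end Concrete

/-- With `V₀`, `D_I`, `D_E` as in the paper (mean-zero `L²` fields, those
orthogonal a.e. to the unit field `T`, and the orthogonal complement of `D_I` inside `V₀`)
and `E > 0` the Young modulus, for every continuous linear functional `ℓ` on `L²(0,L;ℝ³)`
there is a unique `g ∈ D_E` with `E ∫₀ᴸ (g·T)(h·T) = ℓ(h)` for all `h ∈ D_E`
(well-posedness of the limit extensional problem (31) of Theorem 6.2). -/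
theorem extensional_problem_wellposed
    (L : ℝ) (hL : 0 < L)
    (T : ℝ → EuclideanSpace ℝ (Fin 3))
    (hTcont : ContinuousOn T (Icc 0 L))
    (hT1 : ∀ s ∈ Icc 0 L, ‖T s‖ = 1)
    (E : ℝ) (hE : 0 < E)
    (ℓ : Lp (EuclideanSpace ℝ (Fin 3)) 2 (volume.restrict (Ioo 0 L)) →L[ℝ] ℝ) :
    ∃! g : Lp (EuclideanSpace ℝ (Fin 3)) 2 (volume.restrict (Ioo 0 L)),
      ((∫ s, g s ∂(volume.restrict (Ioo 0 L))) = 0 ∧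
        ∀ h : Lp (EuclideanSpace ℝ (Fin 3)) 2 (volume.restrict (Ioo 0 L)),
          (∫ s, h s ∂(volume.restrict (Ioo 0 L))) = 0 →
          (∀ᵐ s ∂(volume.restrict (Ioo 0 L)), ⟪h s, T s⟫ = 0) →
          ⟪g, h⟫ = 0) ∧
      ∀ h : Lp (EuclideanSpace ℝ (Fin 3)) 2 (volume.restrict (Ioo 0 L)),
        ((∫ s, h s ∂(volume.restrict (Ioo 0 L))) = 0 ∧
          ∀ h' : Lp (EuclideanSpace ℝ (Fin 3)) 2 (volume.restrict (Ioo 0 L)),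
            (∫ s, h' s ∂(volume.restrict (Ioo 0 L))) = 0 →
            (∀ᵐ s ∂(volume.restrict (Ioo 0 L)), ⟪h' s, T s⟫ = 0) →
            ⟪h, h'⟫ = 0) →
        E * ∫ s, ⟪g s, T s⟫ * ⟪h s, T s⟫ ∂(volume.restrict (Ioo 0 L)) = ℓ h := by
  let μ : Measure ℝ := volume.restrict (Ioo 0 L)
  have hTm : AEStronglyMeasurable T μ :=
    (hTcont.mono Ioo_subset_Icc_self).aestronglyMeasurable measurableSet_Ioo
  have hTn : ∀ᵐ s ∂μ, ‖T s‖ = 1 := by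
    filter_upwards [ae_restrict_mem measurableSet_Ioo] with s hs
    exact hT1 s (Ioo_subset_Icc_self hs)
  let C : Submodule ℝ (Lp (EuclideanSpace ℝ (Fin 3)) 2 μ) :=
    LinearMap.range (Lp.constL 2 μ ℝ : EuclideanSpace ℝ (Fin 3) →L[ℝ] _).toLinearMap
  have hmem : ∀ g : Lp (EuclideanSpace ℝ (Fin 3)) 2 μ, g ∈ extSpace C (tangProj hTm hTn) ↔
      ((∫ s, g s ∂μ) = 0 ∧ ∀ h : Lp (EuclideanSpace ℝ (Fin 3)) 2 μ,
        (∫ s, h s ∂μ) = 0 → (∀ᵐ s ∂μ, ⟪h s, T s⟫ = 0) → ⟪g, h⟫ = 0) := by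
    intro g
    refine and_congr (mem_orthogonal_const_iff g) ?_
    refine (Submodule.mem_orthogonal' _ _).trans ?_
    constructor
    · intro h u hu1 hu2
      exact h u ⟨(mem_orthogonal_const_iff u).2 hu1, (tangProj_eq_zero_iff hTm hTn u).2 hu2⟩
    · rintro h u ⟨hu1, hu2⟩
      exact h u ((mem_orthogonal_const_iff u).1 hu1) ((tangProj_eq_zero_iff hTm hTn u).1 hu2)
  have main := abstract_wellposed C (tangProj hTm hTn) (tangProj_isSymmetric hTm hTn)
    (tangProj_idem hTm hTn) (E⁻¹ • ℓ)
  refine (existsUnique_congr fun g => ?_).1 main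
  refine and_congr (hmem g) (forall_congr' fun h => imp_congr (hmem h) ?_)
  rw [inner_tangProj, smul_apply, smul_eq_mul, eq_inv_mul_iff_mul_eq₀ hE.ne']
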